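/- The R-linear map κ : V* → V^{⊗(n−1)} defined by κ(v*_i) = (−q)^i · Σ_{w ∈ S_{n−1}} (−q)^{ℓ(w)} v_{(1,2,…,î,…,n)·w}, where (1,2,…,î,…,n) is the multi-index listing {1,…,n}∖{i} in increasing order, w acts on multi-indices by place permutation, and ℓ is Coxeter length, is injective and commutes with the actions of K_i^{±1}, e_i^{(l)} and f_i^{(l)} for all 1 ≤ i ≤ n−1 and l ≥ 1 (acting on V* via the antipode and on V^{⊗(n−1)} via iterated comultiplication). -/

import Mathlib

open scoped BigOperators

/-- The iterated tensor product of `m` copies of `V = R^n` and its dual `V*`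
(which of the two is used in each tensor position is recorded separately by a
function `c : Fin m → Bool`, `true` meaning `V` and `false` meaning `V*`);
its basis is indexed by multi-indices. -/
abbrev Mx (R : Type*) [CommRing R] (n m : ℕ) := ((Fin m → Fin n) →₀ R)

/-- Kronecker delta with values in `ℤ`. -/
def deltaZ {n : ℕ} (a j : Fin n) : ℤ := if j = a then 1 else 0

/-- The action of `K_i^z e_i^{(k)}` on a single tensor factor (`b = true`: the
vector representation `V`; `b = false`: its dual `V*`, on which an element `x`
acts by `φ ↦ φ ∘ S(x)`).  Here `a` plays the role of the index `i` and `b'`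
of `i+1`.  The value at the basis vector with index `j` is returned as an
element of `Fin n →₀ R`. -/
noncomputable def singleE (R : Type*) [CommRing R] (q : Rˣ) (n : ℕ) (b : Bool)
    (a b' : Fin n) (z : ℤ) (k : ℕ) (j : Fin n) : Fin n →₀ R :=
  match b, k with
  | true, 0 => Finsupp.single j ((q ^ (z * (deltaZ a j - deltaZ b' j)) : Rˣ) : R)
  | true, 1 => if j = b' then Finsupp.single a ((q ^ z : Rˣ) : R) else 0
  | false, 0 => Finsupp.single j ((q ^ (z * (deltaZ b' j - deltaZ a j)) : Rˣ) : R)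
  | false, 1 => if j = a then Finsupp.single b' ((-(q ^ (z - 1)) : Rˣ) : R) else 0
  | _, _ + 2 => 0

/-- The action of `f_i^{(k)} K_i^z` on a single tensor factor; conventions as
in `singleE`. -/
noncomputable def singleF (R : Type*) [CommRing R] (q : Rˣ) (n : ℕ) (b : Bool)
    (a b' : Fin n) (z : ℤ) (k : ℕ) (j : Fin n) : Fin n →₀ R :=
  match b, k with
  | true, 0 => Finsupp.single j ((q ^ (z * (deltaZ a j - deltaZ b' j)) : Rˣ) : R)
  | true, 1 => if j = a then Finsupp.single b' ((q ^ z : Rˣ) : R) else 0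
  | false, 0 => Finsupp.single j ((q ^ (z * (deltaZ b' j - deltaZ a j)) : Rˣ) : R)
  | false, 1 => if j = b' then Finsupp.single a ((-(q ^ (z + 1)) : Rˣ) : R) else 0
  | _, _ + 2 => 0

/-- The operator `ρ(K_i^z e_i^{(k)})` on an `m`-fold tensor product of copies
of `V` and `V*` (described by `c`), obtained by iterating the comultiplication
`Δ(K_i^z e_i^{(k)}) = Σ_t q^{t(k−t)}·K_i^z e_i^{(k−t)} ⊗ K_i^{z+t−k} e_i^{(t)}`;
`a`, `b'` play the roles of `i`, `i+1`. -/
noncomputable def opE (R : Type*) [CommRing R] (q : Rˣ) (n : ℕ) (a b' : Fin n) :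
    (m : ℕ) → (c : Fin m → Bool) → ℤ → ℕ → (Mx R n m →ₗ[R] Mx R n m)
  | 0, _, _, k => if k = 0 then LinearMap.id else 0
  | (m + 1), c, z, k =>
    Finsupp.linearCombination R fun J : Fin (m + 1) → Fin n =>
      ∑ t ∈ Finset.range (k + 1),
        ((q ^ (t * (k - t)) : Rˣ) : R) •
          ((singleE R q n (c 0) a b' z (k - t) (J 0)).sum fun j' co =>
            co • Finsupp.mapDomain (Fin.cons j')
              (opE R q n a b' m (fun u => c u.succ) (z + (t : ℤ) - (k : ℤ)) t
                (Finsupp.single (Fin.tail J) 1)))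

/-- The operator `ρ(f_i^{(k)} K_i^z)`, obtained by iterating
`Δ(f_i^{(k)} K_i^z) = Σ_t q^{−t(k−t)}·f_i^{(k−t)} K_i^{z+t} ⊗ f_i^{(t)} K_i^z`. -/
noncomputable def opF (R : Type*) [CommRing R] (q : Rˣ) (n : ℕ) (a b' : Fin n) :
    (m : ℕ) → (c : Fin m → Bool) → ℤ → ℕ → (Mx R n m →ₗ[R] Mx R n m)
  | 0, _, _, k => if k = 0 then LinearMap.id else 0
  | (m + 1), c, z, k =>
    Finsupp.linearCombination R fun J : Fin (m + 1) → Fin n =>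
      ∑ t ∈ Finset.range (k + 1),
        ((q ^ (-(t * (k - t) : ℤ)) : Rˣ) : R) •
          ((singleF R q n (c 0) a b' (z + (t : ℤ)) (k - t) (J 0)).sum fun j' co =>
            co • Finsupp.mapDomain (Fin.cons j')
              (opF R q n a b' m (fun u => c u.succ) z t
                (Finsupp.single (Fin.tail J) 1)))

/-- The operator `ρ(q^h)` for `h = Σ h_i·(dual basis)` in the coweight lattice
`P∨` (identified with `Fin n → ℤ`): it acts diagonally, by `q^{ε_j(h)}` on a
`V`-factor with index `j` and by `q^{−ε_j(h)}` on a `V*`-factor. -/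
noncomputable def opH (R : Type*) [CommRing R] (q : Rˣ) (n : ℕ)
    (m : ℕ) (c : Fin m → Bool) (h : Fin n → ℤ) : Mx R n m →ₗ[R] Mx R n m :=
  Finsupp.linearCombination R fun J : Fin m → Fin n =>
    Finsupp.single J ((q ^ (∑ t, (if c t then (1 : ℤ) else -1) * h (J t)) : Rˣ) : R)

/-- Number of inversions of a permutation of `Fin k` (its Coxeter length). -/
def invCount {k : ℕ} (w : Equiv.Perm (Fin k)) : ℕ :=
  ((Finset.univ : Finset (Fin k × Fin k)).filter
    (fun p => p.1 < p.2 ∧ w p.2 < w p.1)).card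

/-- The increasing enumeration of `{1,…,n} \ {i}` (0-based). -/
def omitIdx {n : ℕ} (i : Fin n) (t : Fin (n - 1)) : Fin n :=
  if (t : ℕ) < (i : ℕ) then ⟨t, by have := t.2; omega⟩ else ⟨(t : ℕ) + 1, by have := t.2; omega⟩

/-- The map `κ : V* → V^{⊗(n−1)}`,
`v*_i ↦ (−q)^i·Σ_{w ∈ S_{n−1}} (−q)^{ℓ(w)} v_{(1,…,î,…,n)·w}` (here `V*` is
the `1`-fold tensor product with a single `V*`-factor). -/
noncomputable def kappaMap (R : Type*) [CommRing R] (q : Rˣ) (n : ℕ) :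
    Mx R n 1 →ₗ[R] Mx R n (n - 1) :=
  Finsupp.linearCombination R fun J : Fin 1 → Fin n =>
    (((-q) ^ ((J 0 : ℕ) + 1) : Rˣ) : R) •
      ∑ w : Equiv.Perm (Fin (n - 1)),
        (((-q) ^ invCount w : Rˣ) : R) • Finsupp.single (fun t => omitIdx (J 0) (w t)) 1

/-!
`κ v*_i` is, up to a unit, the `q`-antisymmetrization of the increasing sequence omitting `i`. Each
`e_i` replaces a letter `i + 1` by `i`. If the sequence contains both letters, they stand in
neighbouring positions `α`, `β`, and the terms of `w` and `s w`, where `s` swaps `α` and `β`, become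
proportional with factor `q`; as the lengths of `w` and `s w` differ by one, their coefficients
`(-q) ^ ℓ` make them cancel. Hence `e_i` survives only on the sequence omitting `i`, which it turns
into the one omitting `i + 1`; the operator `f_i` goes the opposite way. The higher divided powers
vanish because the letters of each sequence are distinct. Finally `κ` is injective because the
coefficient of `κ x` at the increasing sequence omitting `i` is a unit times the `i`-th coordinate
of `x`.
-/

section QuantumActions

variable {R : Type*} [CommRing R] (q : Rˣ) {n m : ℕ} (a b : Fin n)

/-- The weight of a basis vector of a single tensor factor: `K_i` scales the `j`-th basis vector
of `V` (`s = true`) or `V*` (`s = false`) by `q ^ kWeight a b s j`, where `a`, `b` stand for `i`,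
`i + 1`. -/
def kWeight (s : Bool) (j : Fin n) : ℤ :=
  (if s then 1 else -1) * (deltaZ a j - deltaZ b j)

/-- The tensor product `x ⊗ y` of a vector `x` of a single factor with a tensor `y` of order `m`,
in terms of the multi-index basis. -/
noncomputable def consTensor : (Fin n →₀ R) →ₗ[R] Mx R n m →ₗ[R] Mx R n (m + 1) :=
  Finsupp.linearCombination R fun j => Finsupp.lmapDomain R R fun I => Fin.cons j I

theorem consTensor_apply (x : Fin n →₀ R) (y : Mx R n m) :
    consTensor x y = x.sum fun j r => r • y.mapDomain (Fin.cons j) := by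
  rw [consTensor, Finsupp.linearCombination_apply, LinearMap.finsupp_sum_apply]
  rfl

theorem consTensor_single_right (x : Fin n →₀ R) (I : Fin m → Fin n) :
    consTensor x (Finsupp.single I 1) = x.mapDomain fun j => Fin.cons j I := by
  simp [consTensor_apply, Finsupp.mapDomain]

theorem consTensor_single_left (j : Fin n) (u : Rˣ) (y : Mx R n m) :
    consTensor (Finsupp.single j (u : R)) y = u • y.mapDomain (Fin.cons j) := by
  rw [consTensor_apply, Finsupp.sum_single_index (by simp), Units.smul_def]

theorem singleE_zero (s : Bool) (z : ℤ) (j : Fin n) :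
    singleE R q n s a b z 0 j = Finsupp.single j ((q ^ (z * kWeight a b s j) : Rˣ) : R) := by
  cases s <;> simp [singleE, kWeight]

theorem singleE_one_of_ne {s : Bool} {j : Fin n} (hj : j ≠ if s then b else a) (z : ℤ) :
    singleE R q n s a b z 1 j = 0 := by
  cases s <;> simpa [singleE] using fun h => absurd h hj

theorem singleE_add_two (s : Bool) (z : ℤ) (k : ℕ) (j : Fin n) :
    singleE R q n s a b z (k + 2) j = 0 := by
  cases s <;> rfl

theorem singleF_zero (s : Bool) (z : ℤ) (j : Fin n) :
    singleF R q n s a b z 0 j = Finsupp.single j ((q ^ (z * kWeight a b s j) : Rˣ) : R) := by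
  cases s <;> simp [singleF, kWeight]

theorem singleF_one_of_ne {s : Bool} {j : Fin n} (hj : j ≠ if s then a else b) (z : ℤ) :
    singleF R q n s a b z 1 j = 0 := by
  cases s <;> simpa [singleF] using fun h => absurd h hj

theorem singleF_add_two (s : Bool) (z : ℤ) (k : ℕ) (j : Fin n) :
    singleF R q n s a b z (k + 2) j = 0 := by
  cases s <;> rfl

theorem opE_succ_single (c : Fin (m + 1) → Bool) (z : ℤ) (k : ℕ) (J : Fin (m + 1) → Fin n) :
    opE R q n a b (m + 1) c z k (Finsupp.single J 1) =
      ∑ t ∈ Finset.range (k + 1), q ^ (t * (k - t)) •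
        consTensor (singleE R q n (c 0) a b z (k - t) (J 0))
          (opE R q n a b m (Fin.tail c) (z + t - k) t (Finsupp.single (Fin.tail J) 1)) := by
  simp only [opE, Finsupp.linearCombination_single, one_smul, consTensor_apply]
  rfl

theorem opF_succ_single (c : Fin (m + 1) → Bool) (z : ℤ) (k : ℕ) (J : Fin (m + 1) → Fin n) :
    opF R q n a b (m + 1) c z k (Finsupp.single J 1) =
      ∑ t ∈ Finset.range (k + 1), q ^ (-(t * (k - t) : ℤ)) •
        consTensor (singleF R q n (c 0) a b (z + t) (k - t) (J 0))
          (opF R q n a b m (Fin.tail c) z t (Finsupp.single (Fin.tail J) 1)) := by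
  simp only [opF, Finsupp.linearCombination_single, one_smul, consTensor_apply]
  rfl

theorem opE_succ_succ_single (c : Fin (m + 1) → Bool) (z : ℤ) (k : ℕ) (J : Fin (m + 1) → Fin n) :
    opE R q n a b (m + 1) c z (k + 1) (Finsupp.single J 1) =
      q ^ k • consTensor (singleE R q n (c 0) a b z 1 (J 0))
          (opE R q n a b m (Fin.tail c) (z - 1) k (Finsupp.single (Fin.tail J) 1)) +
        consTensor (singleE R q n (c 0) a b z 0 (J 0))
          (opE R q n a b m (Fin.tail c) z (k + 1) (Finsupp.single (Fin.tail J) 1)) := by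
  have hlow : ∀ t ∈ Finset.range k, q ^ (t * (k + 1 - t)) •
      consTensor (singleE R q n (c 0) a b z (k + 1 - t) (J 0))
        (opE R q n a b m (Fin.tail c) (z + t - (k + 1 : ℕ)) t
          (Finsupp.single (Fin.tail J) 1)) = 0 := by
    intro t ht
    obtain ⟨s, rfl⟩ := Nat.exists_eq_add_of_lt (Finset.mem_range.1 ht)
    rw [show t + s + 1 + 1 - t = s + 2 by lia, singleE_add_two, map_zero, LinearMap.zero_apply,
      smul_zero]
  rw [opE_succ_single, Finset.sum_range_succ, Finset.sum_range_succ, Finset.sum_eq_zero hlow,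
    zero_add, show z + k - (k + 1 : ℕ) = z - 1 by push_cast; ring]
  simp

theorem opF_succ_succ_single (c : Fin (m + 1) → Bool) (z : ℤ) (k : ℕ) (J : Fin (m + 1) → Fin n) :
    opF R q n a b (m + 1) c z (k + 1) (Finsupp.single J 1) =
      q ^ (-k : ℤ) • consTensor (singleF R q n (c 0) a b (z + k) 1 (J 0))
          (opF R q n a b m (Fin.tail c) z k (Finsupp.single (Fin.tail J) 1)) +
        consTensor (singleF R q n (c 0) a b (z + (k + 1)) 0 (J 0))
          (opF R q n a b m (Fin.tail c) z (k + 1) (Finsupp.single (Fin.tail J) 1)) := by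
  have hlow : ∀ t ∈ Finset.range k, q ^ (-(t * ((k + 1 : ℕ) - t) : ℤ)) •
      consTensor (singleF R q n (c 0) a b (z + t) (k + 1 - t) (J 0))
        (opF R q n a b m (Fin.tail c) z t (Finsupp.single (Fin.tail J) 1)) = 0 := by
    intro t ht
    obtain ⟨s, rfl⟩ := Nat.exists_eq_add_of_lt (Finset.mem_range.1 ht)
    rw [show t + s + 1 + 1 - t = s + 2 by lia, singleF_add_two, map_zero, LinearMap.zero_apply,
      smul_zero]
  rw [opF_succ_single, Finset.sum_range_succ, Finset.sum_range_succ, Finset.sum_eq_zero hlow,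
    zero_add]
  simp

theorem opE_zero_single (c : Fin m → Bool) (z : ℤ) (J : Fin m → Fin n) :
    opE R q n a b m c z 0 (Finsupp.single J 1) =
      q ^ (z * ∑ t, kWeight a b (c t) (J t)) • Finsupp.single J 1 := by
  induction m with
  | zero => simp [opE]
  | succ m ih =>
    rw [opE_succ_single, zero_add, Finset.sum_range_one, Nat.zero_sub, Nat.cast_zero, add_zero,
      sub_zero, zero_mul, pow_zero, one_smul, ih, singleE_zero, LinearMap.map_smul_of_tower,
      consTensor_single_left, Finsupp.mapDomain_single, Fin.cons_self_tail, smul_smul, ← zpow_add,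
      ← mul_add, Fin.sum_univ_succ, add_comm (kWeight a b (c 0) (J 0))]
    rfl

theorem opF_zero_single (c : Fin m → Bool) (z : ℤ) (J : Fin m → Fin n) :
    opF R q n a b m c z 0 (Finsupp.single J 1) =
      q ^ (z * ∑ t, kWeight a b (c t) (J t)) • Finsupp.single J 1 := by
  induction m with
  | zero => simp [opF]
  | succ m ih =>
    rw [opF_succ_single, zero_add, Finset.sum_range_one, Nat.zero_sub, Nat.cast_zero, add_zero,
      zero_mul, neg_zero, zpow_zero, one_smul, ih, singleF_zero, LinearMap.map_smul_of_tower,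
      consTensor_single_left, Finsupp.mapDomain_single, Fin.cons_self_tail, smul_smul, ← zpow_add,
      ← mul_add, Fin.sum_univ_succ, add_comm (kWeight a b (c 0) (J 0))]
    rfl

theorem opE_zero_zero (c : Fin m → Bool) : opE R q n a b m c 0 0 = LinearMap.id :=
  Finsupp.lhom_ext' fun J => LinearMap.ext_ring <| by simp [opE_zero_single]

theorem opF_zero_zero (c : Fin m → Bool) : opF R q n a b m c 0 0 = LinearMap.id :=
  Finsupp.lhom_ext' fun J => LinearMap.ext_ring <| by simp [opF_zero_single]

theorem opE_single_eq_zero_of_card_lt {c : Fin m → Bool} {J : Fin m → Fin n} {k : ℕ}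
    (h : (Finset.univ.filter fun t => J t = if c t then b else a).card < k) (z : ℤ) :
    opE R q n a b m c z k (Finsupp.single J 1) = 0 := by
  induction m generalizing z k with
  | zero => simp [opE, (Nat.zero_le _).trans_lt h |>.ne']
  | succ m ih =>
    obtain _ | k := k
    · exact absurd h (Nat.not_lt_zero _)
    rw [Fin.card_filter_univ_succ'] at h
    have htail := ih (c := Fin.tail c) (J := Fin.tail J) (lt_of_le_of_lt (Nat.le_add_left _ _) h) z
    rw [opE_succ_succ_single, htail, map_zero, add_zero]
    by_cases h0 : J 0 = if c 0 then b else a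
    · rw [if_pos h0, add_comm 1] at h
      rw [ih (c := Fin.tail c) (J := Fin.tail J) (Nat.lt_of_succ_lt_succ h), map_zero,
        smul_zero]
    · rw [singleE_one_of_ne q a b h0, map_zero, LinearMap.zero_apply, smul_zero]

theorem opF_single_eq_zero_of_card_lt {c : Fin m → Bool} {J : Fin m → Fin n} {k : ℕ}
    (h : (Finset.univ.filter fun t => J t = if c t then a else b).card < k) (z : ℤ) :
    opF R q n a b m c z k (Finsupp.single J 1) = 0 := by
  induction m generalizing z k with
  | zero => simp [opF, (Nat.zero_le _).trans_lt h |>.ne']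
  | succ m ih =>
    obtain _ | k := k
    · exact absurd h (Nat.not_lt_zero _)
    rw [Fin.card_filter_univ_succ'] at h
    have htail := ih (c := Fin.tail c) (J := Fin.tail J) (lt_of_le_of_lt (Nat.le_add_left _ _) h) z
    rw [opF_succ_succ_single, htail, map_zero, add_zero]
    by_cases h0 : J 0 = if c 0 then a else b
    · rw [if_pos h0, add_comm 1] at h
      rw [ih (c := Fin.tail c) (J := Fin.tail J) (Nat.lt_of_succ_lt_succ h), map_zero,
        smul_zero]
    · rw [singleF_one_of_ne q a b h0, map_zero, LinearMap.zero_apply, smul_zero]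

theorem cons_tail_eq_update (J : Fin (m + 1) → Fin n) :
    (fun j => Fin.cons j (Fin.tail J)) = Function.update J 0 := by
  funext j
  rw [← Fin.update_cons_zero (J 0) (Fin.tail J) j, Fin.cons_self_tail]

theorem cons_comp_update_tail (J : Fin (m + 1) → Fin n) (p : Fin m) :
    Fin.cons (J 0) ∘ Function.update (Fin.tail J) p = Function.update J p.succ := by
  funext j
  rw [Function.comp_apply, Fin.cons_update, Fin.cons_self_tail]

theorem sum_Iio_succ {M : Type*} [AddCommMonoid M] (f : Fin (m + 1) → M) (p : Fin m) :
    ∑ t ∈ Finset.Iio p.succ, f t = f 0 + ∑ t ∈ Finset.Iio p, f t.succ := by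
  simp [← Finset.filter_gt_eq_Iio, Finset.sum_filter, Fin.sum_univ_succ]

/-- The `p`-th summand is the term `1 ⊗ ⋯ ⊗ 1 ⊗ e ⊗ K⁻¹ ⊗ ⋯ ⊗ K⁻¹` of the iterated coproduct. -/
theorem opE_one_single (c : Fin m → Bool) (J : Fin m → Fin n) :
    opE R q n a b m c 0 1 (Finsupp.single J 1) =
      ∑ p, q ^ (-∑ t ∈ Finset.Ioi p, kWeight a b (c t) (J t)) •
        (singleE R q n (c p) a b 0 1 (J p)).mapDomain (Function.update J p) := by
  induction m with
  | zero => simp [opE]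
  | succ m ih =>
    rw [opE_succ_succ_single, Fin.sum_univ_succ]
    congr 1
    · rw [opE_zero_single, LinearMap.map_smul_of_tower, consTensor_single_right,
        cons_tail_eq_update, Fin.sum_Ioi_zero]
      simp [Fin.tail]
    · rw [ih, map_sum]
      refine Finset.sum_congr rfl fun p _ => ?_
      rw [singleE_zero, LinearMap.map_smul_of_tower, consTensor_single_left,
        ← Finsupp.mapDomain_comp, cons_comp_update_tail, Fin.sum_Ioi_succ]
      simp [Fin.tail]

/-- The `p`-th summand is the term `K ⊗ ⋯ ⊗ K ⊗ f ⊗ 1 ⊗ ⋯ ⊗ 1` of the iterated coproduct. -/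
theorem opF_one_single (c : Fin m → Bool) (J : Fin m → Fin n) :
    opF R q n a b m c 0 1 (Finsupp.single J 1) =
      ∑ p, q ^ (∑ t ∈ Finset.Iio p, kWeight a b (c t) (J t)) •
        (singleF R q n (c p) a b 0 1 (J p)).mapDomain (Function.update J p) := by
  induction m with
  | zero => simp [opF]
  | succ m ih =>
    rw [opF_succ_succ_single, Fin.sum_univ_succ]
    congr 1
    · rw [opF_zero_single, LinearMap.map_smul_of_tower, consTensor_single_right,
        cons_tail_eq_update, show Finset.Iio (0 : Fin (m + 1)) = ∅ from Finset.Iio_bot]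
      simp
    · rw [ih, map_sum]
      refine Finset.sum_congr rfl fun p _ => ?_
      rw [singleF_zero, LinearMap.map_smul_of_tower, consTensor_single_left,
        ← Finsupp.mapDomain_comp, cons_comp_update_tail, sum_Iio_succ, smul_smul, zpow_add,
        mul_comm]
      simp [Fin.tail]

end QuantumActions

section Inversions

variable {m : ℕ}

theorem swap_lt_swap_iff_of_covBy {ι : Type*} [LinearOrder ι] {α β : ι} (h : α ⋖ β) (u v : ι) :
    Equiv.swap α β v < Equiv.swap α β u ↔ v < u ∧ ¬(v = α ∧ u = β) ∨ v = β ∧ u = α := by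
  have hoff : ∀ x, x ≠ α → x ≠ β → (x < α ↔ x < β) ∧ (α < x ↔ β < x) := fun x hα hβ =>
    ⟨⟨fun hx => hx.trans h.lt, fun hx => (h.le_of_lt hx).lt_of_ne hα⟩,
      fun hx => (h.ge_of_gt hx).lt_of_ne' hβ, h.lt.trans⟩
  have hlt := h.lt
  grind

theorem invCount_one : invCount (1 : Equiv.Perm (Fin m)) = 0 :=
  Finset.card_eq_zero.2 <| Finset.filter_eq_empty_iff.2 fun _ _ h => lt_asymm h.1 h.2

theorem invCount_swap_mul {α β : Fin m} (h : α ⋖ β) {w : Equiv.Perm (Fin m)} (hw : w⁻¹ α < w⁻¹ β) :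
    invCount (Equiv.swap α β * w) = invCount w + 1 := by
  rw [invCount, invCount, ← Finset.card_insert_of_notMem (a := (w⁻¹ α, w⁻¹ β))]
  · congr 1
    ext ⟨x, y⟩
    simp only [Finset.mem_filter_univ, Finset.mem_insert, Prod.mk.injEq, Equiv.Perm.mul_apply,
      swap_lt_swap_iff_of_covBy h, ← Equiv.Perm.eq_inv_iff_eq]
    grind
  · simp [h.lt.not_gt]

end Inversions

section Antisymmetrizer

variable {R : Type*} [CommRing R] (q : Rˣ) {n m : ℕ} {a b : Fin n} {J : Fin m → Fin n}

theorem sum_invCount_smul_eq_zero {M : Type*} [AddCommGroup M] [Module R M] {α β : Fin m}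
    (h : α ⋖ β) {F : Equiv.Perm (Fin m) → M} (hF : ∀ w, F (Equiv.swap α β * w) = F w) :
    ∑ w, (-q) ^ invCount w • q ^ (-if w⁻¹ β < w⁻¹ α then 1 else 0 : ℤ) • F w = 0 := by
  have hpair : ∀ w : Equiv.Perm (Fin m), w⁻¹ α < w⁻¹ β →
      (-q) ^ invCount w • q ^ (-if w⁻¹ β < w⁻¹ α then 1 else 0 : ℤ) • F w +
        (-q) ^ invCount (Equiv.swap α β * w) •
          q ^ (-if (Equiv.swap α β * w)⁻¹ β < (Equiv.swap α β * w)⁻¹ α then 1 else 0 : ℤ) •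
            F (Equiv.swap α β * w) = 0 := by
    intro w hw
    have hw' : (Equiv.swap α β * w)⁻¹ β < (Equiv.swap α β * w)⁻¹ α := by simpa using hw
    rw [invCount_swap_mul h hw, hF, if_neg hw.not_gt, if_pos hw', neg_zero, zpow_zero, one_smul,
      smul_smul, pow_succ, mul_assoc, zpow_neg_one, neg_mul, mul_inv_cancel, mul_neg_one,
      Units.neg_smul, add_neg_cancel]
  refine Finset.sum_involution (fun w _ => Equiv.swap α β * w) (fun w _ => ?_)
    (fun w _ _ hfix => ?_) (fun w _ => Finset.mem_univ _) fun w _ => Equiv.swap_mul_self_mul α β w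
  · rcases lt_or_gt_of_ne (w⁻¹.injective.ne h.ne) with hw | hw
    · exact hpair w hw
    · have := hpair (Equiv.swap α β * w) (by simpa using hw)
      rwa [Equiv.swap_mul_self_mul, add_comm] at this
  · exact h.ne (Equiv.swap_eq_one_iff.1 (mul_eq_right.1 hfix))

/-- The `q`-antisymmetrization `∑ w, (-q) ^ ℓ(w) • v_{J·w}` of the basis tensor `v_J`. -/
noncomputable def qAntisymm (J : Fin m → Fin n) : Mx R n m :=
  ∑ w : Equiv.Perm (Fin m), (-q) ^ invCount w • Finsupp.single (J ∘ w) 1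

theorem map_qAntisymm {M : Type*} [AddCommGroup M] [Module R M] (f : Mx R n m →ₗ[R] M) :
    f (qAntisymm q J) = ∑ w, (-q) ^ invCount w • f (Finsupp.single (J ∘ w) 1) := by
  simp only [qAntisymm, map_sum, LinearMap.map_smul_of_tower]

theorem qAntisymm_apply_self (hJ : Function.Injective J) : qAntisymm q J J = 1 := by
  rw [qAntisymm, Finsupp.finsetSum_apply, Finset.sum_eq_single 1 (fun w _ hw => ?_) (by simp)]
  · simp [invCount_one]
  · have hne : J ≠ J ∘ w := fun h => hw <| Equiv.ext fun t => hJ (congrFun h t).symm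
    rw [Finsupp.smul_apply, Finsupp.single_eq_of_ne hne, smul_zero]

theorem qAntisymm_apply_of_range_ne {I : Fin m → Fin n} (h : Set.range I ≠ Set.range J) :
    qAntisymm q J I = 0 := by
  rw [qAntisymm, Finsupp.finsetSum_apply]
  refine Finset.sum_eq_zero fun w _ => ?_
  have hne : I ≠ J ∘ w := fun hw => h <| by rw [hw, w.surjective.range_comp]
  rw [Finsupp.smul_apply, Finsupp.single_eq_of_ne hne, smul_zero]

theorem opH_single (c : Fin m → Bool) (h : Fin n → ℤ) :
    opH R q n m c h (Finsupp.single J 1) =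
      q ^ (∑ t, (if c t then (1 : ℤ) else -1) * h (J t)) • Finsupp.single J 1 := by
  rw [opH, Finsupp.linearCombination_single, one_smul, Units.smul_def, Finsupp.smul_single_one]

theorem opH_qAntisymm (h : Fin n → ℤ) :
    opH R q n m (fun _ => true) h (qAntisymm q J) = q ^ (∑ t, h (J t)) • qAntisymm q J := by
  rw [map_qAntisymm, qAntisymm, Finset.smul_sum]
  refine Finset.sum_congr rfl fun w _ => ?_
  rw [opH_single, smul_comm]
  simp [Equiv.sum_comp w fun t => h (J t)]

theorem sum_deltaZ_of_injective (hJ : Function.Injective J) {p : Fin m} (hp : J p = a)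
    (s : Finset (Fin m)) : ∑ t ∈ s, deltaZ a (J t) = if p ∈ s then 1 else 0 := by
  simp [deltaZ, ← hp, hJ.eq_iff]

theorem sum_deltaZ_of_notMem_range (ha : a ∉ Set.range J) (s : Finset (Fin m)) :
    ∑ t ∈ s, deltaZ a (J t) = 0 :=
  Finset.sum_eq_zero fun t _ => if_neg fun h => ha ⟨t, h⟩

theorem opE_one_single_of_injective (a : Fin n) (hJ : Function.Injective J) {p : Fin m}
    (hp : J p = b) :
    opE R q n a b m (fun _ => true) 0 1 (Finsupp.single J 1) =
      q ^ (-∑ t ∈ Finset.Ioi p, deltaZ a (J t)) • Finsupp.single (Function.update J p a) 1 := by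
  rw [opE_one_single, Finset.sum_eq_single p (fun t _ ht => ?_) (by simp)]
  · simp [kWeight, Finset.sum_sub_distrib, sum_deltaZ_of_injective hJ hp, singleE, hp]
  · rw [singleE_one_of_ne q a b (s := true) fun h => ht (hJ (h.trans hp.symm)),
      Finsupp.mapDomain_zero, smul_zero]

theorem opF_one_single_of_injective (b : Fin n) (hJ : Function.Injective J) {p : Fin m}
    (hp : J p = a) :
    opF R q n a b m (fun _ => true) 0 1 (Finsupp.single J 1) =
      q ^ (-∑ t ∈ Finset.Iio p, deltaZ b (J t)) • Finsupp.single (Function.update J p b) 1 := by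
  rw [opF_one_single, Finset.sum_eq_single p (fun t _ ht => ?_) (by simp)]
  · simp [kWeight, Finset.sum_sub_distrib, sum_deltaZ_of_injective hJ hp, singleF, hp]
  · rw [singleF_one_of_ne q a b (s := true) fun h => ht (hJ (h.trans hp.symm)),
      Finsupp.mapDomain_zero, smul_zero]

theorem card_filter_comp_perm {ι γ : Type*} [Fintype ι] [DecidableEq γ] (f : ι → γ)
    (w : Equiv.Perm ι) (c : γ) :
    (Finset.univ.filter fun t => (f ∘ w) t = c).card =
      (Finset.univ.filter fun t => f t = c).card :=
  Finset.card_equiv w fun t => by simp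

theorem opE_qAntisymm_eq_zero_of_card_lt {k : ℕ} (a : Fin n)
    (h : (Finset.univ.filter fun t => J t = b).card < k) :
    opE R q n a b m (fun _ => true) 0 k (qAntisymm q J) = 0 := by
  rw [map_qAntisymm]
  refine Finset.sum_eq_zero fun w _ => ?_
  rw [opE_single_eq_zero_of_card_lt q a b ((card_filter_comp_perm J w b).trans_lt h), smul_zero]

theorem opF_qAntisymm_eq_zero_of_card_lt {k : ℕ} (b : Fin n)
    (h : (Finset.univ.filter fun t => J t = a).card < k) :
    opF R q n a b m (fun _ => true) 0 k (qAntisymm q J) = 0 := by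
  rw [map_qAntisymm]
  refine Finset.sum_eq_zero fun w _ => ?_
  rw [opF_single_eq_zero_of_card_lt q a b ((card_filter_comp_perm J w a).trans_lt h), smul_zero]

theorem opE_one_qAntisymm_of_injective (a : Fin n) (hJ : Function.Injective J) {β : Fin m}
    (hβ : J β = b) :
    opE R q n a b m (fun _ => true) 0 1 (qAntisymm q J) =
      ∑ w : Equiv.Perm (Fin m), (-q) ^ invCount w •
        q ^ (-∑ t ∈ Finset.Ioi (w⁻¹ β), deltaZ a ((J ∘ w) t)) •
          Finsupp.single (Function.update J β a ∘ w) 1 := by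
  rw [map_qAntisymm]
  refine Finset.sum_congr rfl fun w _ => ?_
  rw [opE_one_single_of_injective q a (hJ.comp w.injective) (p := w⁻¹ β) (by simp [hβ]),
    Function.update_comp_equiv, Equiv.Perm.inv_def]

theorem opF_one_qAntisymm_of_injective (b : Fin n) (hJ : Function.Injective J) {α : Fin m}
    (hα : J α = a) :
    opF R q n a b m (fun _ => true) 0 1 (qAntisymm q J) =
      ∑ w : Equiv.Perm (Fin m), (-q) ^ invCount w •
        q ^ (-∑ t ∈ Finset.Iio (w⁻¹ α), deltaZ b ((J ∘ w) t)) •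
          Finsupp.single (Function.update J α b ∘ w) 1 := by
  rw [map_qAntisymm]
  refine Finset.sum_congr rfl fun w _ => ?_
  rw [opF_one_single_of_injective q b (hJ.comp w.injective) (p := w⁻¹ α) (by simp [hα]),
    Function.update_comp_equiv, Equiv.Perm.inv_def]

theorem opE_one_qAntisymm_of_notMem_range (hJ : Function.Injective J) (ha : a ∉ Set.range J)
    {β : Fin m} (hβ : J β = b) :
    opE R q n a b m (fun _ => true) 0 1 (qAntisymm q J) =
      qAntisymm q (Function.update J β a) := by
  rw [opE_one_qAntisymm_of_injective q a hJ hβ, qAntisymm]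
  refine Finset.sum_congr rfl fun w _ => ?_
  rw [sum_deltaZ_of_notMem_range fun h => ha (Set.range_comp_subset_range w J h), neg_zero,
    zpow_zero, one_smul]

theorem opF_one_qAntisymm_of_notMem_range (hJ : Function.Injective J) (hb : b ∉ Set.range J)
    {α : Fin m} (hα : J α = a) :
    opF R q n a b m (fun _ => true) 0 1 (qAntisymm q J) =
      qAntisymm q (Function.update J α b) := by
  rw [opF_one_qAntisymm_of_injective q b hJ hα, qAntisymm]
  refine Finset.sum_congr rfl fun w _ => ?_
  rw [sum_deltaZ_of_notMem_range fun h => hb (Set.range_comp_subset_range w J h), neg_zero,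
    zpow_zero, one_smul]

theorem comp_swap_of_apply_eq {ι γ : Type*} [DecidableEq ι] {f : ι → γ} {x y : ι} (h : f x = f y) :
    f ∘ Equiv.swap x y = f := by
  rw [Equiv.comp_swap_eq_update, h, Function.update_eq_self, ← h, Function.update_eq_self]

theorem opE_one_qAntisymm_eq_zero (hJ : Function.Injective J) {α β : Fin m} (h : α ⋖ β)
    (hα : J α = a) (hβ : J β = b) :
    opE R q n a b m (fun _ => true) 0 1 (qAntisymm q J) = 0 := by
  have hsum (w : Equiv.Perm (Fin m)) : ∑ t ∈ Finset.Ioi (w⁻¹ β), deltaZ a ((J ∘ w) t) =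
      if w⁻¹ β < w⁻¹ α then 1 else 0 := by
    rw [sum_deltaZ_of_injective (hJ.comp w.injective) (p := w⁻¹ α) (by simp [hα])]
    simp only [Finset.mem_Ioi]
  rw [opE_one_qAntisymm_of_injective q a hJ hβ]
  simp only [hsum]
  refine sum_invCount_smul_eq_zero q h fun w => ?_
  rw [Equiv.Perm.coe_mul, ← Function.comp_assoc, comp_swap_of_apply_eq]
  simp [h.ne, hα]

theorem opF_one_qAntisymm_eq_zero (hJ : Function.Injective J) {α β : Fin m} (h : α ⋖ β)
    (hα : J α = a) (hβ : J β = b) :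
    opF R q n a b m (fun _ => true) 0 1 (qAntisymm q J) = 0 := by
  have hsum (w : Equiv.Perm (Fin m)) : ∑ t ∈ Finset.Iio (w⁻¹ α), deltaZ b ((J ∘ w) t) =
      if w⁻¹ β < w⁻¹ α then 1 else 0 := by
    rw [sum_deltaZ_of_injective (hJ.comp w.injective) (p := w⁻¹ β) (by simp [hβ])]
    simp only [Finset.mem_Iio]
  rw [opF_one_qAntisymm_of_injective q b hJ hα]
  simp only [hsum]
  refine sum_invCount_smul_eq_zero q h fun w => ?_
  rw [Equiv.Perm.coe_mul, ← Function.comp_assoc, comp_swap_of_apply_eq]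
  simp [h.ne', hβ]

end Antisymmetrizer

section OmittedIndex

variable {n : ℕ}

theorem omitIdx_eq_succAbove (i : Fin (n + 1)) : omitIdx i = i.succAbove := by
  funext t
  simp only [omitIdx, Fin.succAbove, Fin.lt_def, Fin.val_castSucc]
  rfl

theorem strictMono_omitIdx (i : Fin n) : StrictMono (omitIdx i) := by
  cases n with
  | zero => exact i.elim0
  | succ n => exact omitIdx_eq_succAbove i ▸ Fin.strictMono_succAbove i

theorem range_omitIdx (i : Fin n) : Set.range (omitIdx i) = {i}ᶜ := by
  cases n with
  | zero => exact i.elim0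
  | succ n => exact omitIdx_eq_succAbove i ▸ Fin.range_succAbove i

theorem notMem_range_omitIdx (i : Fin n) : i ∉ Set.range (omitIdx i) := by simp [range_omitIdx]

theorem exists_omitIdx_eq {i j : Fin n} (h : j ≠ i) : ∃ t, omitIdx i t = j := by
  rw [← Set.mem_range, range_omitIdx]
  exact h

theorem sum_omitIdx {M : Type*} [AddCommGroup M] (h : Fin n → M) (i : Fin n) :
    ∑ t, h (omitIdx i t) = ∑ j, h j - h i := by
  cases n with
  | zero => exact i.elim0
  | succ n =>
    rw [Fin.sum_univ_succAbove h i, omitIdx_eq_succAbove, add_sub_cancel_left]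
    rfl

theorem covBy_iff_val_add_one_eq {a b : Fin n} : a ⋖ b ↔ (a : ℕ) + 1 = b :=
  Fin.covBy_iff.trans Nat.covBy_iff_add_one_eq

theorem update_omitIdx_of_lt {a b : Fin n} (h : a ⋖ b) {β : Fin (n - 1)} (hβ : omitIdx a β = b) :
    Function.update (omitIdx a) β a = omitIdx b := by
  have hab : (a : ℕ) + 1 = b := covBy_iff_val_add_one_eq.1 h
  funext t
  grind [omitIdx]

theorem update_omitIdx_of_gt {a b : Fin n} (h : a ⋖ b) {α : Fin (n - 1)} (hα : omitIdx b α = a) :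
    Function.update (omitIdx b) α b = omitIdx a := by
  have hab : (a : ℕ) + 1 = b := covBy_iff_val_add_one_eq.1 h
  funext t
  grind [omitIdx]

theorem exists_covBy_omitIdx_eq {a b j : Fin n} (h : a ⋖ b) (ha : j ≠ a) (hb : j ≠ b) :
    ∃ α β, α ⋖ β ∧ omitIdx j α = a ∧ omitIdx j β = b := by
  obtain ⟨α, rfl⟩ := exists_omitIdx_eq ha.symm
  obtain ⟨β, rfl⟩ := exists_omitIdx_eq hb.symm
  exact ⟨α, β, .of_image (OrderEmbedding.ofStrictMono _ (strictMono_omitIdx j)) h, rfl, rfl⟩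

end OmittedIndex

section OmittedAntisymmetrizer

variable {R : Type*} [CommRing R] (q : Rˣ) {n : ℕ} {a b : Fin n}

theorem opE_one_qAntisymm_omitIdx (h : a ⋖ b) (j : Fin n) :
    opE R q n a b (n - 1) (fun _ => true) 0 1 (qAntisymm q (omitIdx j)) =
      if j = a then qAntisymm q (omitIdx b) else 0 := by
  split_ifs with ha
  · subst ha
    obtain ⟨β, hβ⟩ := exists_omitIdx_eq h.ne'
    rw [opE_one_qAntisymm_of_notMem_range q (strictMono_omitIdx j).injective
      (notMem_range_omitIdx j) hβ, update_omitIdx_of_lt h hβ]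
  · by_cases hb : j = b
    · subst hb
      refine opE_qAntisymm_eq_zero_of_card_lt q a ?_
      simpa [Finset.filter_eq_empty_iff] using notMem_range_omitIdx j
    · obtain ⟨α, β, hαβ, hα, hβ⟩ := exists_covBy_omitIdx_eq h ha hb
      exact opE_one_qAntisymm_eq_zero q (strictMono_omitIdx j).injective hαβ hα hβ

theorem opF_one_qAntisymm_omitIdx (h : a ⋖ b) (j : Fin n) :
    opF R q n a b (n - 1) (fun _ => true) 0 1 (qAntisymm q (omitIdx j)) =
      if j = b then qAntisymm q (omitIdx a) else 0 := by
  split_ifs with hb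
  · subst hb
    obtain ⟨α, hα⟩ := exists_omitIdx_eq h.ne
    rw [opF_one_qAntisymm_of_notMem_range q (strictMono_omitIdx j).injective
      (notMem_range_omitIdx j) hα, update_omitIdx_of_gt h hα]
  · by_cases ha : j = a
    · subst ha
      refine opF_qAntisymm_eq_zero_of_card_lt q b ?_
      simpa [Finset.filter_eq_empty_iff] using notMem_range_omitIdx j
    · obtain ⟨α, β, hαβ, hα, hβ⟩ := exists_covBy_omitIdx_eq h ha hb
      exact opF_one_qAntisymm_eq_zero q (strictMono_omitIdx j).injective hαβ hα hβ

end OmittedAntisymmetrizer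

section DualAction

variable {R : Type*} [CommRing R] (q : Rˣ) {n : ℕ} (a b : Fin n)

theorem opE_dual_one_single (J : Fin 1 → Fin n) :
    opE R q n a b 1 (fun _ => false) 0 1 (Finsupp.single J 1) =
      if J 0 = a then -q⁻¹ • Finsupp.single (fun _ => b) 1 else 0 := by
  rw [opE_one_single, Fin.sum_univ_one]
  split_ifs with h
  · rw [singleE, if_pos h, Finsupp.mapDomain_single,
      Function.update_eq_const_of_subsingleton, ← Function.const_def]
    simp [Units.smul_def]
  · rw [singleE_one_of_ne q a b (s := false) h, Finsupp.mapDomain_zero, smul_zero]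

theorem opF_dual_one_single (J : Fin 1 → Fin n) :
    opF R q n a b 1 (fun _ => false) 0 1 (Finsupp.single J 1) =
      if J 0 = b then -q • Finsupp.single (fun _ => a) 1 else 0 := by
  rw [opF_one_single, Fin.sum_univ_one]
  split_ifs with h
  · rw [singleF, if_pos h, Finsupp.mapDomain_single,
      Function.update_eq_const_of_subsingleton, ← Function.const_def]
    simp [Units.smul_def, show Finset.Iio (0 : Fin 1) = ∅ from Finset.Iio_bot]
  · rw [singleF_one_of_ne q a b (s := false) h, Finsupp.mapDomain_zero, smul_zero]

theorem opE_dual_single_of_two_le {k : ℕ} (hk : 2 ≤ k) (J : Fin 1 → Fin n) :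
    opE R q n a b 1 (fun _ => false) 0 k (Finsupp.single J 1) = 0 :=
  opE_single_eq_zero_of_card_lt q a b ((Finset.card_le_univ _).trans_lt hk) 0

theorem opF_dual_single_of_two_le {k : ℕ} (hk : 2 ≤ k) (J : Fin 1 → Fin n) :
    opF R q n a b 1 (fun _ => false) 0 k (Finsupp.single J 1) = 0 :=
  opF_single_eq_zero_of_card_lt q a b ((Finset.card_le_univ _).trans_lt hk) 0

end DualAction

section Kappa

variable {R : Type*} [CommRing R] (q : Rˣ) {n : ℕ} {a b : Fin n}

theorem kappaMap_single (J : Fin 1 → Fin n) :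
    kappaMap R q n (Finsupp.single J 1) =
      (-q) ^ ((J 0 : ℕ) + 1) • qAntisymm q (omitIdx (J 0)) := by
  rw [kappaMap, Finsupp.linearCombination_single, one_smul]
  rfl

theorem kappaMap_apply_omitIdx (x : Mx R n 1) (i : Fin n) :
    kappaMap R q n x (omitIdx i) = (-q) ^ ((i : ℕ) + 1) • x fun _ => i := by
  suffices Finsupp.lapply (omitIdx i) ∘ₗ kappaMap R q n =
      (-q) ^ ((i : ℕ) + 1) • Finsupp.lapply fun _ => i from LinearMap.congr_fun this x
  refine Finsupp.lhom_ext' fun J => LinearMap.ext_ring ?_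
  simp only [LinearMap.comp_apply, Finsupp.lsingle_apply, kappaMap_single, LinearMap.smul_apply,
    Finsupp.lapply_apply, Finsupp.smul_apply]
  obtain rfl | hi := eq_or_ne (J 0) i
  · rw [qAntisymm_apply_self q (strictMono_omitIdx _).injective,
      show (fun _ => J 0) = J from (eq_const_of_subsingleton J 0).symm,
      Finsupp.single_eq_same]
  · have hJ : (fun _ => i) ≠ J := fun h => hi (congrFun h 0).symm
    rw [qAntisymm_apply_of_range_ne q (by simpa [range_omitIdx] using hi.symm),
      Finsupp.single_eq_of_ne hJ, smul_zero, smul_zero]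

theorem kappaMap_injective : Function.Injective (kappaMap R q n) := by
  intro x y hxy
  ext I
  have hI : I = fun _ => I 0 := eq_const_of_subsingleton I 0
  have h := congrArg (· (omitIdx (I 0))) hxy
  simp only [kappaMap_apply_omitIdx, smul_left_cancel_iff] at h
  rwa [← hI] at h

/-- The factor `q ^ ∑ j, h j` is the quantum determinant character, trivial on the coweights of
`sl_n`. -/
theorem opH_comp_kappaMap (h : Fin n → ℤ) :
    opH R q n (n - 1) (fun _ => true) h ∘ₗ kappaMap R q n =
      q ^ (∑ j, h j) • kappaMap R q n ∘ₗ opH R q n 1 (fun _ => false) h := by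
  refine Finsupp.lhom_ext' fun J => LinearMap.ext_ring ?_
  simp only [LinearMap.comp_apply, Finsupp.lsingle_apply, LinearMap.smul_apply, opH_single,
    kappaMap_single, LinearMap.map_smul_of_tower, opH_qAntisymm, sum_omitIdx, Fin.sum_univ_one]
  rw [smul_smul (q ^ ∑ j, h j), ← zpow_add, smul_comm]
  simp [sub_eq_add_neg]

theorem card_filter_omitIdx_le_one (i j : Fin n) :
    (Finset.univ.filter fun t => omitIdx i t = j).card ≤ 1 :=
  Finset.card_le_one.2 fun _ hs _ ht => (strictMono_omitIdx i).injective <|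
    (Finset.mem_filter.1 hs).2.trans (Finset.mem_filter.1 ht).2.symm

theorem kappaMap_comp_opE (h : a ⋖ b) (k : ℕ) :
    kappaMap R q n ∘ₗ opE R q n a b 1 (fun _ => false) 0 k =
      opE R q n a b (n - 1) (fun _ => true) 0 k ∘ₗ kappaMap R q n := by
  refine Finsupp.lhom_ext' fun J => LinearMap.ext_ring ?_
  simp only [LinearMap.comp_apply, Finsupp.lsingle_apply, kappaMap_single,
    LinearMap.map_smul_of_tower]
  match k with
  | 0 => simp only [opE_zero_zero, LinearMap.id_apply, kappaMap_single]
  | 1 =>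
    rw [opE_dual_one_single, opE_one_qAntisymm_omitIdx q h]
    split_ifs with ha
    · have hb : (b : ℕ) = a + 1 := (covBy_iff_val_add_one_eq.1 h).symm
      rw [LinearMap.map_smul_of_tower, kappaMap_single, smul_smul, ha, hb, pow_succ' _ (a + 1 : ℕ)]
      simp
    · rw [map_zero, smul_zero]
  | k + 2 =>
    rw [opE_dual_single_of_two_le q a b (Nat.le_add_left 2 k), map_zero,
      opE_qAntisymm_eq_zero_of_card_lt q a, smul_zero]
    exact (card_filter_omitIdx_le_one _ _).trans_lt (by lia)

theorem kappaMap_comp_opF (h : a ⋖ b) (k : ℕ) :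
    kappaMap R q n ∘ₗ opF R q n a b 1 (fun _ => false) 0 k =
      opF R q n a b (n - 1) (fun _ => true) 0 k ∘ₗ kappaMap R q n := by
  refine Finsupp.lhom_ext' fun J => LinearMap.ext_ring ?_
  simp only [LinearMap.comp_apply, Finsupp.lsingle_apply, kappaMap_single,
    LinearMap.map_smul_of_tower]
  match k with
  | 0 => simp only [opF_zero_zero, LinearMap.id_apply, kappaMap_single]
  | 1 =>
    rw [opF_dual_one_single, opF_one_qAntisymm_omitIdx q h]
    split_ifs with hb
    · have hb' : (J 0 : ℕ) = a + 1 :=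
        hb ▸ (covBy_iff_val_add_one_eq.1 h).symm
      rw [LinearMap.map_smul_of_tower, kappaMap_single, smul_smul, hb', pow_succ' _ (a + 1 : ℕ)]
    · rw [map_zero, smul_zero]
  | k + 2 =>
    rw [opF_dual_single_of_two_le q a b (Nat.le_add_left 2 k), map_zero,
      opF_qAntisymm_eq_zero_of_card_lt q b, smul_zero]
    exact (card_filter_omitIdx_le_one _ _).trans_lt (by lia)

end Kappa

theorem sum_mul_deltaZ_sub_deltaZ {n : ℕ} (ε : ℤ) (a b : Fin n) :
    ∑ j, ε * (deltaZ a j - deltaZ b j) = 0 := by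
  simp [deltaZ, ← Finset.mul_sum, Finset.sum_sub_distrib]

theorem stmt3_general (R : Type*) [CommRing R] (q : Rˣ) (n : ℕ) :
    Function.Injective (kappaMap R q n) ∧
    (∀ h : Fin n → ℤ,
      opH R q n (n - 1) (fun _ => true) h ∘ₗ kappaMap R q n =
        q ^ (∑ j, h j) • kappaMap R q n ∘ₗ opH R q n 1 (fun _ => false) h) ∧
    (∀ a b : Fin n, a ⋖ b → ∀ k,
      kappaMap R q n ∘ₗ opE R q n a b 1 (fun _ => false) 0 k =
        opE R q n a b (n - 1) (fun _ => true) 0 k ∘ₗ kappaMap R q n) ∧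
    (∀ a b : Fin n, a ⋖ b → ∀ k,
      kappaMap R q n ∘ₗ opF R q n a b 1 (fun _ => false) 0 k =
        opF R q n a b (n - 1) (fun _ => true) 0 k ∘ₗ kappaMap R q n) :=
  ⟨kappaMap_injective q, opH_comp_kappaMap q, fun _ _ h k => kappaMap_comp_opE q h k,
    fun _ _ h k => kappaMap_comp_opF q h k⟩

/-- `κ` is injective and commutes with the actions of
`K_i^{±1}`, `e_i^{(l)}` and `f_i^{(l)}` for all `1 ≤ i ≤ n−1`, `l ≥ 1`
(acting on `V*` via the antipode and on `V^{⊗(n−1)}` via iterated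
comultiplication). -/
theorem stmt3 (R : Type*) [CommRing R] (q : Rˣ) (n : ℕ) (hn : 1 ≤ n) :
    Function.Injective (kappaMap R q n) ∧
    (∀ (i : Fin n) (hi : (i : ℕ) + 1 < n) (ε : ℤ), ε = 1 ∨ ε = -1 →
      kappaMap R q n ∘ₗ
          opH R q n 1 (fun _ => false)
            (fun j => ε * (deltaZ i j - deltaZ ⟨(i : ℕ) + 1, hi⟩ j)) =
        opH R q n (n - 1) (fun _ => true)
            (fun j => ε * (deltaZ i j - deltaZ ⟨(i : ℕ) + 1, hi⟩ j)) ∘ₗ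
          kappaMap R q n) ∧
    (∀ (i : Fin n) (hi : (i : ℕ) + 1 < n) (l : ℕ), 1 ≤ l →
      kappaMap R q n ∘ₗ opE R q n i ⟨(i : ℕ) + 1, hi⟩ 1 (fun _ => false) 0 l =
        opE R q n i ⟨(i : ℕ) + 1, hi⟩ (n - 1) (fun _ => true) 0 l ∘ₗ kappaMap R q n) ∧
    (∀ (i : Fin n) (hi : (i : ℕ) + 1 < n) (l : ℕ), 1 ≤ l →
      kappaMap R q n ∘ₗ opF R q n i ⟨(i : ℕ) + 1, hi⟩ 1 (fun _ => false) 0 l =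
        opF R q n i ⟨(i : ℕ) + 1, hi⟩ (n - 1) (fun _ => true) 0 l ∘ₗ kappaMap R q n) := by
  obtain ⟨hinj, hH, hE, hF⟩ := stmt3_general R q n
  exact ⟨hinj, fun i hi ε _ => by rw [hH, sum_mul_deltaZ_sub_deltaZ, zpow_zero, one_smul],
    fun _ _ l _ => hE _ _ (covBy_iff_val_add_one_eq.2 rfl) l,
    fun _ _ l _ => hF _ _ (covBy_iff_val_add_one_eq.2 rfl) l⟩
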